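/- (Corollary on single-letter distillation bound) In the setting of Theorem 4, assume additionally that the resource norms satisfy ‖X^{⊗n}‖_μ ≤ (‖X‖_μ)^n for every X ∈ T_sa(H_A) and every n ≥ 1. Then any achievable distillation rate D > 0 (witnessed by trace-norm- and resource-norm-contracting maps Γ_n with (1/2)‖Γ_n(ρ^{⊗n}) − φ^{⊗⌊Dn⌋}‖₁ → 0) satisfies D · (− limsup_{m→∞} (1/m) log₂ ‖φ^{⊗m}‖_μ°) ≤ log₂ ‖ρ‖_μ. -/

import Mathlib

/-!
The maps `Γ n` need only be tested against the witness `φ^{⊗m}` itself, with `m = ⌊D n⌋`.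
As `φ^{⊗m}` is a projection (`tpow_mul_self`), its pairing with an operator is at most the trace
norm of that operator (`abs_hip_le_trNorm`); since `⟨φ^{⊗m}, φ^{⊗m}⟩ = 1`, convergence in trace norm
makes `⟨φ^{⊗m}, Γ n (ρ^{⊗n})⟩` at least `1/2` for large `n`. On the other hand the resource norm of
`Γ n (ρ^{⊗n})` is at most `‖ρ‖_μ ^ n`, so duality (`hip_div_le_dualNormF`) gives
`‖φ^{⊗m}‖_μ° ≥ (1/2) ‖ρ‖_μ ^ (-n)`. Taking logarithms and dividing by `m`, where `n / m → 1 / D`,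
the limit superior of `(1/m) log₂ ‖φ^{⊗m}‖_μ°` along the subsequence `m = ⌊D n⌋`, hence along all `m`,
is at least `-(1/D) log₂ ‖ρ‖_μ`.

The dual norm is defined by a real supremum, so duality requires knowing that this supremum is over
a bounded set; that follows from the continuity of linear functionals in finite dimension
(`exists_bound_of_norm`).
-/

open scoped ComplexOrder
open Filter

noncomputable section

/-- The real vector space of self-adjoint (Hermitian) operators on `ℂ^ι`. -/
abbrev HMat (ι : Type) [Fintype ι] [DecidableEq ι] : Type :=
  selfAdjoint (Matrix ι ι ℂ)

variable {ι κ : Type} [Fintype ι] [DecidableEq ι] [Fintype κ] [DecidableEq κ]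

/-- The matrix underlying a self-adjoint operator is Hermitian. -/
def herm (X : HMat ι) : X.1.IsHermitian := X.2

/-- The (real) Hilbert–Schmidt inner product `⟨Q, X⟩ = Tr (Q X)`. -/
def hip (Q X : HMat ι) : ℝ := (Matrix.trace (Q.1 * X.1)).re

/-- The trace norm of a self-adjoint operator: the sum of absolute values of eigenvalues. -/
def trNorm (X : HMat ι) : ℝ := ∑ i, |(herm X).eigenvalues i|

/-- The operator norm of a self-adjoint operator: the largest absolute value of an eigenvalue. -/
def opNorm (X : HMat ι) : ℝ := ⨆ i, |(herm X).eigenvalues i|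

/-- A state: a positive semidefinite operator of unit trace. -/
def IsState (ρ : HMat ι) : Prop := ρ.1.PosSemidef ∧ Matrix.trace ρ.1 = 1

/-- A pure state: a rank-one orthogonal projection. -/
def IsPureState (φ : HMat ι) : Prop := IsState φ ∧ φ.1 * φ.1 = φ.1

/-- A norm-like function on self-adjoint operators. -/
structure MatNorm (ι : Type) [Fintype ι] [DecidableEq ι] where
  toFun : HMat ι → ℝ
  eq_zero' : ∀ X, toFun X = 0 → X = 0
  smul' : ∀ (t : ℝ) (X), toFun (t • X) = |t| * toFun X
  add_le' : ∀ X Y, toFun (X + Y) ≤ toFun X + toFun Y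

/-- A resource norm: a norm with `‖ρ‖ ≥ 1` on every state. -/
structure ResourceNorm (ι : Type) [Fintype ι] [DecidableEq ι] extends MatNorm ι where
  one_le_state' : ∀ ρ, IsState ρ → 1 ≤ toFun ρ

/-- The dual norm `‖Q‖° = sup {⟨Q, X⟩ : ‖X‖ ≤ 1}`. -/
def dualNormF (ν : HMat ι → ℝ) (Q : HMat ι) : ℝ :=
  sSup {r | ∃ X, ν X ≤ 1 ∧ r = hip Q X}

/-- Membership in the class `O_μ` of maps contracting the trace norm and the resource norms. -/
def MemO (νi : ResourceNorm ι) (νo : ResourceNorm κ) (Λ : HMat ι →ₗ[ℝ] HMat κ) : Prop :=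
  (∀ X, trNorm (Λ X) ≤ trNorm X) ∧ (∀ X, νo.toFun (Λ X) ≤ νi.toFun X)

/-- The trace-norm ε-ball around a state. -/
def ball (ρ : HMat ι) (ε : ℝ) : Set (HMat ι) :=
  {X | trNorm X ≤ 1 ∧ trNorm (X - ρ) ≤ ε}

/-- Loewner order: `A ≤ B` iff `B - A` is positive semidefinite. -/
def loew (A B : Matrix ι ι ℂ) : Prop := (B - A).PosSemidef

/-- The feasible values `⟨Q, Z⟩` entering the emancipated hypothesis testing quantity. -/
def dhSet (ρ Z : HMat ι) (ε : ℝ) : Set ℝ :=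
  {r | ∃ Q : HMat ι, loew (-(1 : Matrix ι ι ℂ)) Q.1 ∧ loew Q.1 1 ∧
        1 - ε ≤ hip Q ρ ∧ r = hip Q Z}

/-- The non-logarithmic emancipated hypothesis testing quantity `d_ħ^ε(ρ‖Z)`,
with value `+∞` when the infimum is `≤ 0`. -/
def dEmanc (ρ Z : HMat ι) (ε : ℝ) : EReal :=
  if 0 < sInf (dhSet ρ Z ε) then (((sInf (dhSet ρ Z ε))⁻¹ : ℝ) : EReal) else ⊤

/-- The emancipated hypothesis testing relative entropy `D_ħ^ε(ρ‖Z)` (base-2 logarithmic form),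
with value `+∞` when the infimum is `≤ 0`. -/
def DEmanc (ρ Z : HMat ι) (ε : ℝ) : EReal :=
  if 0 < sInf (dhSet ρ Z ε) then ((-Real.logb 2 (sInf (dhSet ρ Z ε)) : ℝ) : EReal) else ⊤


/-- The `n`-fold tensor (Kronecker) power of a self-adjoint operator. -/
def tpow {d : ℕ} (A : HMat (Fin d)) (n : ℕ) : HMat (Fin n → Fin d) :=
  ⟨Matrix.of fun i j => ∏ k, A.1 (i k) (j k), by
    refine Matrix.IsHermitian.isSelfAdjoint ?_
    refine Matrix.IsHermitian.ext fun i j => ?_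
    simp only [Matrix.of_apply]
    rw [star_prod]
    exact Finset.prod_congr rfl fun k _ => (herm A).apply (i k) (j k)⟩

/-- Combining operators on `m` and `n` copies into one on `m + n` copies (tensor product). -/
def kron {d m n : ℕ} (Y : HMat (Fin m → Fin d)) (Z : HMat (Fin n → Fin d)) :
    HMat (Fin (m + n) → Fin d) :=
  ⟨Matrix.of fun i j =>
      Y.1 (fun k => i (Fin.castAdd n k)) (fun k => j (Fin.castAdd n k)) *
        Z.1 (fun k => i (Fin.natAdd m k)) (fun k => j (Fin.natAdd m k)), by
    refine Matrix.IsHermitian.isSelfAdjoint ?_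
    refine Matrix.IsHermitian.ext fun i j => ?_
    simp only [Matrix.of_apply, star_mul']
    rw [(herm Y).apply, (herm Z).apply]⟩

/-- A linear functional on a finite-dimensional real space is bounded with respect to any norm,
the norm being given as a bare function rather than as an instance. -/
lemma exists_bound_of_norm {V : Type*} [AddCommGroup V] [Module ℝ V] [FiniteDimensional ℝ V]
    (ν : V → ℝ) (h0 : ∀ X, ν X = 0 → X = 0) (hs : ∀ (t : ℝ) X, ν (t • X) = |t| * ν X)
    (ha : ∀ X Y, ν (X + Y) ≤ ν X + ν Y) (f : V →ₗ[ℝ] ℝ) :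
    ∃ C, 0 ≤ C ∧ ∀ X, f X ≤ C * ν X := by
  let N : AddGroupNorm V :=
    { toFun := ν
      map_zero' := by simpa using hs 0 0
      add_le' := ha
      neg' := fun X => by simpa using hs (-1) X
      eq_zero_of_map_eq_zero' := h0 }
  let : NormedAddCommGroup V := N.toNormedAddCommGroup
  let : NormedSpace ℝ V := ⟨fun t X => (hs t X).le⟩
  let F : V →L[ℝ] ℝ := LinearMap.toContinuousLinearMap f
  exact ⟨‖F‖, norm_nonneg _, fun X => (le_abs_self _).trans (F.le_opNorm X)⟩

lemma MatNorm.nonneg (ν : MatNorm ι) (X : HMat ι) : 0 ≤ ν.toFun X := by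
  have h0 : ν.toFun 0 = 0 := by simpa using ν.smul' 0 0
  have hneg : ν.toFun (-X) = ν.toFun X := by simpa using ν.smul' (-1) X
  have h := ν.add_le' X (-X)
  rw [add_neg_cancel, h0, hneg] at h
  linarith

lemma hip_add (Q X Y : HMat ι) : hip Q (X + Y) = hip Q X + hip Q Y := by
  simp [hip, mul_add]

lemma hip_smul (Q : HMat ι) (t : ℝ) (X : HMat ι) : hip Q (t • X) = t * hip Q X := by
  simp [hip]

/-- The set whose supremum defines the dual norm is bounded above, so that `sSup` is a genuine
supremum there. -/
lemma bddAbove_dualNormF (ν : MatNorm ι) (Q : HMat ι) :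
    BddAbove {r | ∃ X, ν.toFun X ≤ 1 ∧ r = hip Q X} := by
  let f : HMat ι →ₗ[ℝ] ℝ :=
    { toFun := hip Q
      map_add' := hip_add Q
      map_smul' := hip_smul Q }
  have : FiniteDimensional ℝ (HMat ι) :=
    inferInstanceAs (FiniteDimensional ℝ (selfAdjoint.submodule ℝ (Matrix ι ι ℂ)))
  obtain ⟨C, hC, h⟩ := exists_bound_of_norm ν.toFun ν.eq_zero' ν.smul' ν.add_le' f
  refine ⟨C, ?_⟩
  rintro r ⟨X, hX, rfl⟩
  exact (h X).trans (mul_le_of_le_one_right hC hX)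

lemma hip_div_le_dualNormF (ν : MatNorm ι) (Q X : HMat ι) {c : ℝ} (hc : 0 < c)
    (hX : ν.toFun X ≤ c) : hip Q X / c ≤ dualNormF ν.toFun Q := by
  refine le_csSup (bddAbove_dualNormF ν Q) ⟨c⁻¹ • X, ?_, ?_⟩
  · rw [ν.smul', abs_of_pos (inv_pos.2 hc), inv_mul_le_iff₀ hc]
    simpa using hX
  · rw [hip_smul, div_eq_inv_mul]

/-- The diagonal entries of a Hermitian projection have modulus at most one: by idempotence
`P i i = ∑ j, ‖P i j‖²`, which dominates `‖P i i‖²`. -/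
lemma norm_diag_le_one {P : Matrix ι ι ℂ} (hP : P.IsHermitian) (hPP : P * P = P) (i : ι) :
    ‖P i i‖ ≤ 1 := by
  have h1 : P i i = ((∑ j, ‖P i j‖ ^ 2 : ℝ) : ℂ) := by
    conv_lhs => rw [← hPP, Matrix.mul_apply]
    push_cast
    refine Finset.sum_congr rfl fun j _ => ?_
    rw [← hP.apply j i]
    exact Complex.mul_conj' _
  have h2 : ‖P i i‖ = ∑ j, ‖P i j‖ ^ 2 := by
    conv_lhs => rw [h1]
    rw [Complex.norm_real, Real.norm_of_nonneg (by positivity)]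
  have h3 : ‖P i i‖ ^ 2 ≤ ‖P i i‖ := by
    conv_rhs => rw [h2]
    exact Finset.single_le_sum (f := fun j => ‖P i j‖ ^ 2) (fun j _ => by positivity)
      (Finset.mem_univ i)
  nlinarith [norm_nonneg (P i i)]

/-- Hölder's inequality `|Tr (Q X)| ≤ ‖Q‖∞ ‖X‖₁` for a projection `Q`: in an eigenbasis of `X`,
the trace is the sum of the eigenvalues of `X` weighted by diagonal entries of a projection. -/
lemma abs_hip_le_trNorm (Q X : HMat ι) (hQ : Q.1 * Q.1 = Q.1) : |hip Q X| ≤ trNorm X := by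
  set U : Matrix ι ι ℂ := (herm X).eigenvectorUnitary.1 with hU
  have hUU : U * star U = 1 := Unitary.coe_mul_star_self (herm X).eigenvectorUnitary
  set P : Matrix ι ι ℂ := star U * Q.1 * U with hPdef
  have hP : P.IsHermitian := by
    have h : star Q.1 = Q.1 := Q.2
    change star P = P
    simp [hPdef, h, mul_assoc]
  have hPP : P * P = P := by
    calc P * P = star U * Q.1 * (U * star U) * Q.1 * U := by simp only [hPdef, mul_assoc]
      _ = star U * (Q.1 * Q.1) * U := by rw [hUU, mul_one]; simp only [mul_assoc]
      _ = P := by rw [hQ]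
  have hX : X.1 = U * Matrix.diagonal (RCLike.ofReal ∘ (herm X).eigenvalues) * star U := by
    conv_lhs => rw [(herm X).spectral_theorem, Unitary.conjStarAlgAut_apply]
  have htr : Matrix.trace (Q.1 * X.1) = ∑ i, P i i * ((herm X).eigenvalues i : ℂ) := by
    conv_lhs => rw [hX, ← mul_assoc, Matrix.trace_mul_comm, ← mul_assoc, ← mul_assoc]
    simp [Matrix.trace, Matrix.mul_diagonal, hPdef]
  calc |hip Q X| ≤ ‖Matrix.trace (Q.1 * X.1)‖ := Complex.abs_re_le_norm _
    _ ≤ ∑ i, ‖P i i * ((herm X).eigenvalues i : ℂ)‖ := by rw [htr]; exact norm_sum_le _ _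
    _ ≤ ∑ i, |(herm X).eigenvalues i| := by
        refine Finset.sum_le_sum fun i _ => ?_
        rw [norm_mul, Complex.norm_real, Real.norm_eq_abs]
        exact mul_le_of_le_one_left (abs_nonneg _) (norm_diag_le_one hP hPP i)

lemma tpow_mul_self {d : ℕ} (A : HMat (Fin d)) (hA : A.1 * A.1 = A.1) (n : ℕ) :
    (tpow A n).1 * (tpow A n).1 = (tpow A n).1 := by
  ext i j
  simp only [tpow, Matrix.mul_apply, Matrix.of_apply, ← Finset.prod_mul_distrib]
  rw [← Fintype.prod_sum (fun k l => A.1 (i k) l * A.1 l (j k))]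
  refine Finset.prod_congr rfl fun k _ => ?_
  rw [← Matrix.mul_apply, hA]

lemma trace_tpow {d : ℕ} (A : HMat (Fin d)) (n : ℕ) :
    Matrix.trace (tpow A n).1 = Matrix.trace A.1 ^ n := by
  simp only [tpow, Matrix.trace, Matrix.diag_apply, Matrix.of_apply]
  rw [← Fintype.prod_sum (fun (_ : Fin n) l => A.1 l l)]
  simp

/-- One-shot bound: an operator of resource norm at most `c` that lies within trace-norm distance `1/2`
of the pure state `φ^{⊗m}` forces `‖φ^{⊗m}‖_μ° ≥ 1 / (2 c)`. -/
lemma half_div_le_dualNormF {d : ℕ} (φ : HMat (Fin d)) (hφ : IsPureState φ) (m : ℕ)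
    (ν : MatNorm (Fin m → Fin d)) (X : HMat (Fin m → Fin d)) {c : ℝ} (hc : 0 < c)
    (hX : ν.toFun X ≤ c) (hd : trNorm (X - tpow φ m) ≤ 1 / 2) :
    1 / 2 / c ≤ dualNormF ν.toFun (tpow φ m) := by
  refine le_trans ?_ (hip_div_le_dualNormF ν (tpow φ m) X hc hX)
  have hself : hip (tpow φ m) (tpow φ m) = 1 := by
    rw [hip, tpow_mul_self φ hφ.2, trace_tpow, hφ.1.2]
    simp
  have hsplit : hip (tpow φ m) X = 1 + hip (tpow φ m) (X - tpow φ m) := by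
    rw [← hself, ← hip_add, add_sub_cancel]
  have h := (abs_le.1 (abs_hip_le_trNorm (tpow φ m) (X - tpow φ m) (tpow_mul_self φ hφ.2 m))).1
  gcongr
  linarith

/-- **Corollary (single-letter distillation bound).**
If additionally `‖X^{⊗n}‖_μ ≤ (‖X‖_μ)^n`, then any achievable distillation rate `D` satisfies
`D · (− limsup (1/m) log₂ ‖φ^{⊗m}‖_μ°) ≤ log₂ ‖ρ‖_μ`. -/
theorem single_letter_distillation_bound
    {dA dB : ℕ}
    (νA : (n : ℕ) → ResourceNorm (Fin n → Fin dA))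
    (νB : (n : ℕ) → ResourceNorm (Fin n → Fin dB))
    (hsubmul : ∀ (X : HMat (Fin dA)) (n : ℕ), 1 ≤ n →
      (νA n).toFun (tpow X n) ≤ ((νA 1).toFun (tpow X 1)) ^ n)
    (ρ : HMat (Fin dA)) (hρ : IsState ρ)
    (φ : HMat (Fin dB)) (hφ : IsPureState φ)
    (D : ℝ) (hD : 0 < D)
    (Γ : (n : ℕ) → (HMat (Fin n → Fin dA) →ₗ[ℝ] HMat (Fin ⌊D * (n : ℝ)⌋₊ → Fin dB)))
    (hΓtr : ∀ n X, trNorm ((Γ n) X) ≤ trNorm X)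
    (hΓμ : ∀ (n : ℕ) X, (νB ⌊D * (n : ℝ)⌋₊).toFun ((Γ n) X) ≤ (νA n).toFun X)
    (hconv : Tendsto
      (fun n : ℕ => (1 / 2) * trNorm ((Γ n) (tpow ρ n) - tpow φ ⌊D * (n : ℝ)⌋₊))
      atTop (nhds 0)) :
    ((D : ℝ) : EReal) *
        (- Filter.limsup
          (fun m : ℕ =>
            (((m : ℝ)⁻¹ * Real.logb 2 (dualNormF (νB m).toFun (tpow φ m)) : ℝ) : EReal))
          atTop) ≤
      ((Real.logb 2 ((νA 1).toFun (tpow ρ 1)) : ℝ) : EReal) := by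
  set N : ℝ := (νA 1).toFun (tpow ρ 1) with hN
  set L : ℝ := Real.logb 2 N with hL
  -- The operator `ρ` has trace one, hence is nonzero and has positive norm.
  have hNpos : 0 < N := by
    refine lt_of_le_of_ne ((νA 1).toMatNorm.nonneg _) fun h => ?_
    have h0 := (νA 1).eq_zero' _ h.symm
    have htr := trace_tpow ρ 1
    rw [h0, hρ.2] at htr
    simp at htr
  set a : ℕ → ℝ := fun m =>
    (m : ℝ)⁻¹ * Real.logb 2 (dualNormF (νB m).toFun (tpow φ m)) with ha
  set k : ℕ → ℕ := fun n => ⌊D * (n : ℝ)⌋₊ with hk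
  have hk_top : Tendsto k atTop atTop :=
    tendsto_nat_floor_atTop.comp (tendsto_natCast_atTop_atTop.const_mul_atTop hD)
  have hlower : ∀ᶠ n : ℕ in atTop, -((k n : ℝ))⁻¹ - ((k n : ℝ) / n)⁻¹ * L ≤ a (k n) := by
    filter_upwards [hconv.eventually (gt_mem_nhds (show (0 : ℝ) < 1 / 4 by norm_num)),
      eventually_ge_atTop 1] with n hn hn1
    have hc : 0 < N ^ n := pow_pos hNpos n
    have hdual := half_div_le_dualNormF φ hφ (k n) (νB (k n)).toMatNorm (Γ n (tpow ρ n)) hc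
      ((hΓμ n _).trans (hsubmul ρ n hn1)) (by linarith)
    have hlog := Real.logb_le_logb_of_le (b := 2) (by norm_num) (by positivity) hdual
    have hval : Real.logb 2 (1 / 2 / N ^ n) = -1 - n * L := by
      rw [Real.logb_div (by norm_num) hc.ne', Real.logb_pow, one_div, Real.logb_inv,
        Real.logb_self_eq_one (by norm_num)]
    rw [hval] at hlog
    have h := mul_le_mul_of_nonneg_left hlog (show 0 ≤ ((k n : ℝ))⁻¹ by positivity)
    refine le_trans (le_of_eq ?_) h
    rw [inv_div]
    ring
  have hlim : Tendsto (fun n : ℕ => -((k n : ℝ))⁻¹ - ((k n : ℝ) / n)⁻¹ * L) atTop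
      (nhds (-(D⁻¹ * L))) := by
    have h1 : Tendsto (fun n : ℕ => ((k n : ℝ))⁻¹) atTop (nhds 0) :=
      tendsto_inv_atTop_zero.comp (tendsto_natCast_atTop_atTop.comp hk_top)
    have h2 : Tendsto (fun n : ℕ => (k n : ℝ) / n) atTop (nhds D) :=
      (tendsto_nat_floor_mul_div_atTop hD.le).comp tendsto_natCast_atTop_atTop
    have h3 := h1.neg.sub ((h2.inv₀ hD.ne').mul_const L)
    simpa using h3
  have hsup : ((-(D⁻¹ * L) : ℝ) : EReal) ≤ limsup (fun m : ℕ => (a m : EReal)) atTop := by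
    have hlimE := (continuous_coe_real_ereal.tendsto (-(D⁻¹ * L))).comp hlim
    calc ((-(D⁻¹ * L) : ℝ) : EReal)
        = limsup (fun n : ℕ => ((-((k n : ℝ))⁻¹ - ((k n : ℝ) / n)⁻¹ * L : ℝ) : EReal)) atTop :=
          hlimE.limsup_eq.symm
      _ ≤ limsup (fun n : ℕ => (a (k n) : EReal)) atTop :=
          limsup_le_limsup (hlower.mono fun n hn => EReal.coe_le_coe_iff.2 hn)
      _ = limsup (fun m : ℕ => (a m : EReal)) (map k atTop) := rfl
      _ ≤ limsup (fun m : ℕ => (a m : EReal)) atTop := limsup_le_limsup_of_le hk_top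
  calc (D : EReal) * (-limsup (fun m : ℕ => (a m : EReal)) atTop)
      ≤ (D : EReal) * (-((-(D⁻¹ * L) : ℝ) : EReal)) :=
        mul_le_mul_of_nonneg_left (EReal.neg_le_neg_iff.2 hsup) (EReal.coe_nonneg.2 hD.le)
    _ = (L : EReal) := by
        rw [← EReal.coe_neg, ← EReal.coe_mul, neg_neg, mul_inv_cancel_left₀ hD.ne']

end
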